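/- Let 0 < d < 4/5. Then ∫₀¹∫₀¹ (1-u)^{2-2d} v^{1-d} (1-v)^{2-3d} (1-uv)^{5d-5} ₂F₁(d,2d-1;2d;u) ₂F₁(1,d;2-d;v) du dv = [Γ(1-d)² Γ(2d) Γ(3-3d) Γ(4-5d) / (2 Γ(d) Γ(5-5d) Γ(4-4d))] · ₃F₂(d, 2-2d, 3-3d; 3-2d, 4-4d; 1) + [Γ(1-d)(1-2d)/(2-2d)] · [Γ(3-3d)Γ(4-5d)/(Γ(5-5d)Γ(4-4d))] · ₄F₃(1, d, 2-2d, 3-3d; 2-d, 3-2d, 4-4d; 1). -/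

import Mathlib

open Real MeasureTheory

/-- Pochhammer symbol `(a)_k = a (a+1) ⋯ (a+k-1)` for real `a`. -/
noncomputable def poch (a : ℝ) (k : ℕ) : ℝ := (ascPochhammer ℝ k).eval a

/-- Gaussian hypergeometric function `₂F₁(a,b;c;z)`. -/
noncomputable def hyp2F1 (a b c z : ℝ) : ℝ :=
  ∑' k : ℕ, (poch a k * poch b k) / poch c k * z ^ k / (Nat.factorial k)

/-- Generalized hypergeometric function `₃F₂(a₁,a₂,a₃;b₁,b₂;z)`. -/
noncomputable def hyp3F2 (a₁ a₂ a₃ b₁ b₂ z : ℝ) : ℝ :=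
  ∑' k : ℕ, (poch a₁ k * poch a₂ k * poch a₃ k) / (poch b₁ k * poch b₂ k) * z ^ k /
    (Nat.factorial k)

/-- Generalized hypergeometric function `₄F₃(a₁,a₂,a₃,a₄;b₁,b₂,b₃;z)`. -/
noncomputable def hyp4F3 (a₁ a₂ a₃ a₄ b₁ b₂ b₃ z : ℝ) : ℝ :=
  ∑' k : ℕ, (poch a₁ k * poch a₂ k * poch a₃ k * poch a₄ k) /
    (poch b₁ k * poch b₂ k * poch b₃ k) * z ^ k / (Nat.factorial k)

/-!
Write `b = 3 - 3d`, `c = 4 - 4d`, `α = d` and `β = 2d - 1`. The factor `₂F₁(1, d; 2 - d; v)` is a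
product of powers of `v` and `1 - v` and an incomplete beta integral over `0 < s < v`. Exchanging
the order of integration over the triangle `s < v` leaves a `v`-integral with an elementary
primitive, a power of `(1 - v) / (1 - u v)`; what remains is Euler's integral for
`₂F₁(c - d, c - b; c; u)`, which Euler's transformation turns into `₂F₁(d, b; c; u)`. Expanding the
latter in powers of `u` reduces the theorem to the moments `∫ u ^ j ₂F₁(α, β; β + 1; u) du`. Since
`(β)_k / (β + 1)_k = β / (β + k)`, a partial fraction decomposition and Gauss's theorem evaluate
these; the two partial fractions give the `₃F₂` and the `₄F₃`.
-/

open Set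
open ProbabilityTheory (beta beta_eq_betaIntegralReal beta_pos)
open scoped Nat

section Pochhammer

variable {a b c : ℝ}

lemma poch_zero (a : ℝ) : poch a 0 = 1 := by simp [poch]

lemma poch_succ (a : ℝ) (k : ℕ) : poch a (k + 1) = poch a k * (a + k) := by
  simp [poch, ascPochhammer_succ_eval]

lemma poch_one (k : ℕ) : poch 1 k = k ! := by simp [poch]

lemma poch_pos (ha : 0 < a) (k : ℕ) : 0 < poch a k := ascPochhammer_pos k a ha

lemma poch_mul_add (a : ℝ) (k : ℕ) : poch a k * (a + k) = a * poch (a + 1) k := by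
  induction k with
  | zero => simp [poch_zero]
  | succ k ih => rw [poch_succ, poch_succ, ih]; push_cast; ring

lemma poch_le_poch (ha : 0 < a) (hab : a ≤ b) (k : ℕ) : poch a k ≤ poch b k := by
  induction k with
  | zero => simp only [poch_zero, le_refl]
  | succ k ih =>
    have hb := (poch_pos (ha.trans_le hab) k).le
    rw [poch_succ, poch_succ]
    gcongr

lemma Gamma_add_natCast (ha : 0 < a) (k : ℕ) :
    Real.Gamma (a + k) = poch a k * Real.Gamma a := by
  induction k with
  | zero => simp [poch_zero]
  | succ k ih =>
    rw [poch_succ, Nat.cast_succ, ← add_assoc, Real.Gamma_add_one (by positivity), ih]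
    ring

lemma beta_add_natCast (ha : 0 < a) (hb : 0 < b) (k : ℕ) :
    beta (a + k) b = beta a b * (poch a k / poch (a + b) k) := by
  have hab := add_pos ha hb
  rw [beta, beta, add_right_comm, Gamma_add_natCast ha, Gamma_add_natCast hab]
  have := Real.Gamma_pos_of_pos hab
  have := poch_pos hab k
  field_simp

lemma beta_one_right (ha : 0 < a) : beta a 1 = 1 / a := by
  rw [beta, Real.Gamma_one, Real.Gamma_add_one ha.ne', mul_one, one_div, mul_comm a,
    div_mul_cancel_left₀ (Real.Gamma_pos_of_pos ha).ne']

lemma beta_one_left (ha : 0 < a) : beta 1 a = 1 / a := by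
  rw [← beta_one_right ha, beta, beta, mul_comm, add_comm]

lemma hasSum_poch_mul_pow (a : ℝ) {x : ℝ} (hx : |x| < 1) :
    HasSum (fun k : ℕ => poch a k / k ! * x ^ k) ((1 - x) ^ (-a)) := by
  have hseries := (Real.one_div_one_sub_rpow_hasFPowerSeriesOnBall_zero a).hasSum (y := x)
    (by simpa [Real.enorm_eq_ofReal_abs] using hx)
  have hcoeff (k : ℕ) : Ring.choose (a + k - 1) k = poch a k / k ! := by
    rw [← Ring.multichoose_eq, eq_div_iff (by positivity), mul_comm, ← nsmul_eq_mul,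
      Ring.factorial_nsmul_multichoose_eq_ascPochhammer, Polynomial.ascPochhammer_smeval_eq_eval,
      poch]
  simpa only [zero_add, FormalMultilinearSeries.ofScalars_apply_eq, hcoeff, smul_eq_mul, one_div,
    ← Real.rpow_neg (sub_nonneg.2 (abs_lt.1 hx).2.le)] using hseries

/-- The coefficient of `z ^ k` in `₂F₁(a, b; c; z)`. -/
noncomputable def hypCoeff (a b c : ℝ) (k : ℕ) : ℝ := poch a k * poch b k / poch c k / k !

lemma hyp2F1_eq_tsum (a b c z : ℝ) : hyp2F1 a b c z = ∑' k, hypCoeff a b c k * z ^ k :=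
  tsum_congr fun k => by rw [hypCoeff]; ring

lemma hyp2F1_comm (a b c z : ℝ) : hyp2F1 a b c z = hyp2F1 b a c z := by
  simp only [hyp2F1, mul_comm (poch a _)]

lemma hypCoeff_pos (ha : 0 < a) (hb : 0 < b) (hc : 0 < c) (k : ℕ) : 0 < hypCoeff a b c k := by
  have := poch_pos ha k
  have := poch_pos hb k
  have := poch_pos hc k
  unfold hypCoeff
  positivity

lemma hypCoeff_add_one_mul (a : ℝ) (hb : -1 < b) (k : ℕ) :
    hypCoeff a b (b + 1) k * (b + k) = b * (poch a k / k !) := by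
  have := poch_pos (neg_lt_iff_pos_add.1 hb) k
  rw [hypCoeff, div_div, div_mul_eq_mul_div, mul_assoc, poch_mul_add]
  field_simp

end Pochhammer

section EulerIntegral

variable {a b c z : ℝ}

lemma one_sub_mul_pos {x : ℝ} (hz : z ≤ 1) (hx : x ∈ Ioo 0 1) : 0 < 1 - z * x := by
  nlinarith [hx.1, hx.2]

lemma one_sub_mul_pos_of_mem_Icc {x : ℝ} (hz : z < 1) (hx : x ∈ Icc 0 1) : 0 < 1 - z * x := by
  rcases le_total z 0 with hz0 | hz0 <;> nlinarith [hx.1, hx.2]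

lemma betaIntegrand_ofReal {t : ℝ} (ht : t ∈ Ioo 0 1) (a b : ℝ) :
    (t : ℂ) ^ ((a : ℂ) - 1) * (1 - (t : ℂ)) ^ ((b : ℂ) - 1) =
      ((t ^ (a - 1) * (1 - t) ^ (b - 1) : ℝ) : ℂ) := by
  push_cast [Complex.ofReal_cpow ht.1.le, Complex.ofReal_cpow (sub_nonneg.2 ht.2.le)]
  rfl

lemma integrableOn_betaIntegrand (ha : 0 < a) (hb : 0 < b) :
    IntegrableOn (fun t : ℝ => t ^ (a - 1) * (1 - t) ^ (b - 1)) (Ioo 0 1) := by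
  have hconv := Complex.betaIntegral_convergent (u := a) (v := b) (by simpa) (by simpa)
  rw [intervalIntegrable_iff_integrableOn_Ioo_of_le zero_le_one] at hconv
  simpa using! (hconv.congr_fun (fun t ht => betaIntegrand_ofReal ht a b) measurableSet_Ioo).re

lemma integral_betaIntegrand (ha : 0 < a) (hb : 0 < b) :
    ∫ t in Ioo (0 : ℝ) 1, t ^ (a - 1) * (1 - t) ^ (b - 1) = beta a b := by
  rw [beta_eq_betaIntegralReal a b ha hb, Complex.betaIntegral,
    intervalIntegral.integral_of_le zero_le_one, integral_Ioc_eq_integral_Ioo,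
    setIntegral_congr_fun measurableSet_Ioo fun t ht => betaIntegrand_ofReal ht a b,
    integral_complex_ofReal, Complex.ofReal_re]

/-- The integrand of Euler's integral representation of `₂F₁(a, b; c; z)`. -/
noncomputable def eulerIntegrand (a b c z t : ℝ) : ℝ :=
  t ^ (b - 1) * (1 - t) ^ (c - b - 1) * (1 - z * t) ^ (-a)

/-- Euler's integral for `₂F₁(a, b; c; z)`, without the normalizing factor `1 / B(b, c - b)`. -/
noncomputable def eulerIntegral (a b c z : ℝ) : ℝ := ∫ t in Ioo 0 1, eulerIntegrand a b c z t

lemma integrableOn_eulerIntegrand (a : ℝ) (hb : 0 < b) (hbc : b < c) (hz : z < 1) :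
    IntegrableOn (eulerIntegrand a b c z) (Ioo 0 1) := by
  have hcont : ContinuousOn (fun t : ℝ => (1 - z * t) ^ (-a)) (Icc 0 1) :=
    ContinuousOn.rpow_const (by fun_prop) fun t ht =>
      Or.inl (one_sub_mul_pos_of_mem_Icc hz ht).ne'
  obtain ⟨M, hM⟩ := isCompact_Icc.exists_bound_of_continuousOn hcont
  refine (integrableOn_betaIntegrand hb (sub_pos.2 hbc)).mul_bdd (c := M)
    ((hcont.mono Ioo_subset_Icc_self).aestronglyMeasurable measurableSet_Ioo) ?_
  exact ae_restrict_of_forall_mem measurableSet_Ioo fun t ht => hM t (Ioo_subset_Icc_self ht)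

lemma hasSum_eulerIntegrand (a b c : ℝ) (hz0 : 0 ≤ z) (hz1 : z ≤ 1) {t : ℝ} (ht : t ∈ Ioo 0 1) :
    HasSum (fun k : ℕ => poch a k / k ! * z ^ k * (t ^ (b + k - 1) * (1 - t) ^ (c - b - 1)))
      (eulerIntegrand a b c z t) := by
  have hzt : |z * t| < 1 := by
    rw [abs_of_nonneg (mul_nonneg hz0 ht.1.le)]
    linarith [one_sub_mul_pos hz1 ht]
  refine ((hasSum_poch_mul_pow a hzt).mul_left
    (t ^ (b - 1) * (1 - t) ^ (c - b - 1))).congr_fun fun k => ?_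
  rw [add_sub_right_comm, Real.rpow_add ht.1, Real.rpow_natCast, mul_pow]
  ring

lemma hasSum_eulerIntegral_div_beta (ha : 0 < a) (hb : 0 < b) (hbc : b < c) (hz0 : 0 ≤ z)
    (hz1 : z ≤ 1) (hint : IntegrableOn (eulerIntegrand a b c z) (Ioo 0 1)) :
    HasSum (fun k => hypCoeff a b c k * z ^ k) (eulerIntegral a b c z / beta b (c - b)) := by
  have hcb : 0 < c - b := sub_pos.2 hbc
  let term (k : ℕ) (t : ℝ) : ℝ :=
    poch a k / k ! * z ^ k * (t ^ (b + k - 1) * (1 - t) ^ (c - b - 1))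
  have hterm : ∀ t ∈ Ioo (0 : ℝ) 1, HasSum (term · t) (eulerIntegrand a b c z t) :=
    fun t ht => hasSum_eulerIntegrand a b c hz0 hz1 ht
  have hterm_nonneg : ∀ k, ∀ t ∈ Ioo (0 : ℝ) 1, 0 ≤ term k t := by
    intro k t ht
    have := poch_pos ha k
    have := ht.1
    have := sub_pos.2 ht.2
    positivity
  have hterm_integrable (k : ℕ) : IntegrableOn (term k) (Ioo 0 1) :=
    (integrableOn_betaIntegrand (by positivity) hcb).const_mul _
  have hterm_integral (k : ℕ) :
      ∫ t in Ioo 0 1, term k t = beta b (c - b) * (hypCoeff a b c k * z ^ k) := by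
    rw [integral_const_mul, integral_betaIntegrand (by positivity) hcb, beta_add_natCast hb hcb,
      add_sub_cancel, hypCoeff]
    ring
  have hsum : HasSum (fun k => ∫ t in Ioo 0 1, term k t) (eulerIntegral a b c z) := by
    refine hasSum_integral_of_dominated_convergence term
      (fun k => (hterm_integrable k).aestronglyMeasurable)
      (fun k => ae_restrict_of_forall_mem measurableSet_Ioo fun t ht =>
        (Real.norm_of_nonneg (hterm_nonneg k t ht)).le) ?_ ?_ ?_
    · exact ae_restrict_of_forall_mem measurableSet_Ioo fun t ht => (hterm t ht).summable
    · exact hint.congr_fun (fun t ht => (hterm t ht).tsum_eq.symm) measurableSet_Ioo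
    · exact ae_restrict_of_forall_mem measurableSet_Ioo hterm
  simp_rw [hterm_integral] at hsum
  simpa only [mul_div_cancel_left₀ _ (beta_pos hb hcb).ne'] using hsum.div_const (beta b (c - b))

lemma hasSum_hyp2F1 (ha : 0 < a) (hb : 0 < b) (hbc : b < c) (hz0 : 0 ≤ z) (hz1 : z < 1) :
    HasSum (fun k => hypCoeff a b c k * z ^ k) (hyp2F1 a b c z) := by
  rw [hyp2F1_eq_tsum]
  exact (hasSum_eulerIntegral_div_beta ha hb hbc hz0 hz1.le
    (integrableOn_eulerIntegrand a hb hbc hz1)).summable.hasSum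

lemma hyp2F1_eq_eulerIntegral (ha : 0 < a) (hb : 0 < b) (hbc : b < c) (hz0 : 0 ≤ z)
    (hz1 : z < 1) : hyp2F1 a b c z = eulerIntegral a b c z / beta b (c - b) :=
  (hasSum_hyp2F1 ha hb hbc hz0 hz1).unique
    (hasSum_eulerIntegral_div_beta ha hb hbc hz0 hz1.le (integrableOn_eulerIntegrand a hb hbc hz1))

lemma hyp2F1_nonneg (ha : 0 < a) (hb : 0 < b) (hc : 0 < c) (hz : 0 ≤ z) :
    0 ≤ hyp2F1 a b c z := by
  rw [hyp2F1_eq_tsum]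
  exact tsum_nonneg fun k => mul_nonneg (hypCoeff_pos ha hb hc k).le (pow_nonneg hz k)

lemma hasSum_hypCoeff_gauss (ha : 0 < a) (hb : 0 < b) (habc : a + b < c) :
    HasSum (hypCoeff a b c) (beta b (c - a - b) / beta b (c - b)) := by
  have hcongr : EqOn (fun t => t ^ (b - 1) * (1 - t) ^ (c - a - b - 1))
      (eulerIntegrand a b c 1) (Ioo 0 1) := fun t ht => by
    rw [eulerIntegrand, one_mul, mul_assoc, ← Real.rpow_add (sub_pos.2 ht.2)]
    ring_nf
  have hpos : 0 < c - a - b := by linarith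
  have hsum := hasSum_eulerIntegral_div_beta ha hb (by linarith) zero_le_one le_rfl
    ((integrableOn_betaIntegrand hb hpos).congr_fun hcongr measurableSet_Ioo)
  simpa only [one_pow, mul_one, eulerIntegral, ← setIntegral_congr_fun measurableSet_Ioo hcongr,
    integral_betaIntegrand hb hpos] using hsum

end EulerIntegral

section MobiusInvolution

variable {z x : ℝ}

/-- The Möbius involution `x ↦ (1 - x) / (1 - z x)` of the unit interval. It exchanges `0` and `1`,
and substituting it in Euler's integral yields Euler's transformation of `₂F₁`. -/
noncomputable def unitMobius (z x : ℝ) : ℝ := (1 - x) / (1 - z * x)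

lemma one_sub_unitMobius (hx : 1 - z * x ≠ 0) :
    1 - unitMobius z x = x * (1 - z) / (1 - z * x) := by
  rw [unitMobius, one_sub_div hx]
  ring

lemma one_sub_mul_unitMobius (hx : 1 - z * x ≠ 0) :
    1 - z * unitMobius z x = (1 - z) / (1 - z * x) := by
  rw [unitMobius, ← mul_div_assoc, one_sub_div hx]
  ring

lemma unitMobius_unitMobius (hz : z ≠ 1) (hx : 1 - z * x ≠ 0) :
    unitMobius z (unitMobius z x) = x := by
  rw [unitMobius, one_sub_unitMobius hx, one_sub_mul_unitMobius hx,
    div_div_div_cancel_right₀ hx, mul_div_cancel_right₀ _ (sub_ne_zero.2 hz.symm)]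

lemma unitMobius_mem_Ioo (hz : z < 1) (hx : x ∈ Ioo 0 1) : unitMobius z x ∈ Ioo 0 1 := by
  have hzx := one_sub_mul_pos hz.le hx
  have hpos : 0 < x * (1 - z) / (1 - z * x) := div_pos (mul_pos hx.1 (sub_pos.2 hz)) hzx
  rw [← one_sub_unitMobius hzx.ne'] at hpos
  exact ⟨div_pos (sub_pos.2 hx.2) hzx, by linarith⟩

lemma hasDerivAt_unitMobius (hx : 1 - z * x ≠ 0) :
    HasDerivAt (unitMobius z) (-((1 - z) / (1 - z * x) ^ 2)) x := by
  refine (((hasDerivAt_id' x).const_sub 1).fun_div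
    (((hasDerivAt_id' x).const_mul z).const_sub 1) hx).congr_deriv ?_
  ring

lemma setIntegral_comp_unitMobius (hz : z < 1) (f : ℝ → ℝ) :
    ∫ x in Ioo 0 1, f x = ∫ x in Ioo 0 1, (1 - z) / (1 - z * x) ^ 2 * f (unitMobius z x) := by
  have hinvol : LeftInvOn (unitMobius z) (unitMobius z) (Ioo 0 1) := fun x hx =>
    unitMobius_unitMobius hz.ne (one_sub_mul_pos hz.le hx).ne'
  have hmaps : MapsTo (unitMobius z) (Ioo 0 1) (Ioo 0 1) := fun x hx => unitMobius_mem_Ioo hz hx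
  have himage : unitMobius z '' Ioo 0 1 = Ioo 0 1 :=
    (hinvol.surjOn hmaps).image_eq_of_mapsTo hmaps
  conv_lhs => rw [← himage, integral_image_eq_integral_abs_deriv_smul measurableSet_Ioo
    (fun x hx => (hasDerivAt_unitMobius (one_sub_mul_pos hz.le hx).ne').hasDerivWithinAt)
    hinvol.injOn]
  refine setIntegral_congr_fun measurableSet_Ioo fun x _ => ?_
  have : 0 ≤ (1 - z) / (1 - z * x) ^ 2 := div_nonneg (sub_nonneg.2 hz.le) (sq_nonneg _)
  simp only [abs_neg, abs_of_nonneg this, smul_eq_mul]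

lemma eulerIntegral_euler_transformation (a b c : ℝ) (hz : z < 1) :
    eulerIntegral a b c z = (1 - z) ^ (c - a - b) * eulerIntegral (c - a) (c - b) c z := by
  rw [eulerIntegral, setIntegral_comp_unitMobius hz, eulerIntegral, ← integral_const_mul]
  refine setIntegral_congr_fun measurableSet_Ioo fun x hx => ?_
  have hx1 : 0 < 1 - x := sub_pos.2 hx.2
  have hz1 : 0 < 1 - z := sub_pos.2 hz
  have hzx := one_sub_mul_pos hz.le hx
  simp only [eulerIntegrand]
  rw [one_sub_unitMobius hzx.ne', one_sub_mul_unitMobius hzx.ne', unitMobius,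
    Real.div_rpow hx1.le hzx.le, Real.div_rpow (mul_pos hx.1 hz1).le hzx.le,
    Real.div_rpow hz1.le hzx.le, Real.mul_rpow hx.1.le hz1.le]
  have hpow_z : (1 - z) * ((1 - z) ^ (c - b - 1) * (1 - z) ^ (-a)) = (1 - z) ^ (c - a - b) := by
    rw [← Real.rpow_add hz1, mul_comm, ← Real.rpow_add_one hz1.ne']
    ring_nf
  have hpow_zx : (1 - z * x) ^ (b - 1) * (1 - z * x) ^ (c - b - 1) * (1 - z * x) ^ (-a) *
      (1 - z * x) ^ 2 = (1 - z * x) ^ (c - a) := by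
    rw [← Real.rpow_natCast, ← Real.rpow_add hzx, ← Real.rpow_add hzx, ← Real.rpow_add hzx]
    push_cast
    ring_nf
  rw [← hpow_z, Real.rpow_neg hzx.le (c - a), ← hpow_zx, sub_sub_cancel]
  generalize 1 - z * x = y
  ring

lemma rpow_mul_hyp2F1_one_left {a b v : ℝ} (ha : 0 < a) (hab : 0 < a + b) (hv : v ∈ Ioo 0 1) :
    v ^ a * hyp2F1 1 (a + b) (a + 1) v =
      a * (1 - v) ^ (-b) * ∫ s in Ioo 0 v, s ^ (a - 1) * (1 - s) ^ (b - 1) := by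
  have hscale : ∫ s in Ioo 0 v, s ^ (a - 1) * (1 - s) ^ (b - 1) =
      v * ∫ t in Ioo 0 1, (v * t) ^ (a - 1) * (1 - v * t) ^ (b - 1) := by
    have := intervalIntegral.mul_integral_comp_mul_left (a := 0) (b := 1)
      (f := fun s : ℝ => s ^ (a - 1) * (1 - s) ^ (b - 1)) v
    simpa only [mul_zero, mul_one, intervalIntegral.integral_of_le hv.1.le,
      intervalIntegral.integral_of_le zero_le_one, integral_Ioc_eq_integral_Ioo] using this.symm
  have hpow : ∫ t in Ioo 0 1, (v * t) ^ (a - 1) * (1 - v * t) ^ (b - 1) =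
      v ^ (a - 1) * eulerIntegral (1 - b) a (a + 1) v := by
    rw [eulerIntegral, ← integral_const_mul]
    refine setIntegral_congr_fun measurableSet_Ioo fun t ht => ?_
    simp only [eulerIntegrand, add_sub_cancel_left, sub_self, Real.rpow_zero, neg_sub]
    rw [Real.mul_rpow hv.1.le ht.1.le]
    ring
  rw [hyp2F1_comm, hyp2F1_eq_eulerIntegral hab one_pos (by linarith) hv.1.le hv.2,
    add_sub_cancel_right, beta_one_left ha, eulerIntegral_euler_transformation _ _ _ hv.2,
    hscale, hpow, Real.rpow_sub_one hv.1.ne']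
  have := hv.1
  field_simp
  ring_nf

end MobiusInvolution

section TriangleFubini

variable {μ : Measure ℝ} [SFinite μ] {f g : ℝ → ℝ}

lemma indicator_triangle_eq_mul_indicator_Ioi (f g : ℝ → ℝ) (x y : ℝ) :
    {p : ℝ × ℝ | p.1 < p.2}.indicator (fun p => f p.1 * g p.2) (x, y) =
      f x * (Ioi x).indicator g y := by
  by_cases hxy : x < y <;> simp [hxy]

lemma indicator_triangle_eq_mul_indicator_Iio (f g : ℝ → ℝ) (x y : ℝ) :
    {p : ℝ × ℝ | p.1 < p.2}.indicator (fun p => f p.1 * g p.2) (x, y) =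
      g y * (Iio y).indicator f x := by
  by_cases hxy : x < y <;> simp [hxy, mul_comm]

lemma integrable_indicator_triangle (hf : AEStronglyMeasurable f μ)
    (hg : AEStronglyMeasurable g μ) (hg_int : ∀ᵐ x ∂μ, IntegrableOn g (Ioi x) μ)
    (hfg : Integrable (fun x => f x * ∫ y in Ioi x, ‖g y‖ ∂μ) μ) :
    Integrable ({p : ℝ × ℝ | p.1 < p.2}.indicator fun p => f p.1 * g p.2) (μ.prod μ) := by
  have hmeas : AEStronglyMeasurable (fun p : ℝ × ℝ => f p.1 * g p.2) (μ.prod μ) :=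
    hf.comp_fst.mul hg.comp_snd
  rw [integrable_prod_iff (hmeas.indicator (measurableSet_lt measurable_fst measurable_snd))]
  simp only [indicator_triangle_eq_mul_indicator_Ioi, norm_mul, norm_indicator_eq_indicator_norm,
    integral_const_mul, integral_indicator measurableSet_Ioi]
  refine ⟨hg_int.mono fun x hx => ((integrable_indicator_iff measurableSet_Ioi).2 hx).const_mul _,
    hfg.norm.congr (.of_forall fun x => ?_)⟩
  simp only [norm_mul]
  rw [Real.norm_of_nonneg (integral_nonneg fun y => norm_nonneg (g y))]

lemma integrable_mul_setIntegral_Iio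
    (h : Integrable ({p : ℝ × ℝ | p.1 < p.2}.indicator fun p => f p.1 * g p.2) (μ.prod μ)) :
    Integrable (fun y => g y * ∫ x in Iio y, f x ∂μ) μ := by
  simpa only [indicator_triangle_eq_mul_indicator_Iio, integral_const_mul,
    integral_indicator measurableSet_Iio] using h.integral_prod_right

lemma integral_mul_setIntegral_Iio
    (h : Integrable ({p : ℝ × ℝ | p.1 < p.2}.indicator fun p => f p.1 * g p.2) (μ.prod μ)) :
    ∫ y, g y * ∫ x in Iio y, f x ∂μ ∂μ = ∫ x, f x * ∫ y in Ioi x, g y ∂μ ∂μ := by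
  have hswap := integral_integral_swap
    (f := fun x y => {p : ℝ × ℝ | p.1 < p.2}.indicator (fun p => f p.1 * g p.2) (x, y)) h
  conv_lhs at hswap => simp only [indicator_triangle_eq_mul_indicator_Ioi, integral_const_mul,
    integral_indicator measurableSet_Ioi]
  conv_rhs at hswap => simp only [indicator_triangle_eq_mul_indicator_Iio, integral_const_mul,
    integral_indicator measurableSet_Iio]
  exact hswap.symm

end TriangleFubini

section PowerSeries

lemma integrable_of_hasSum_of_summable_integral_norm {α ι E : Type*} [MeasurableSpace α]
    [Countable ι] [NormedAddCommGroup E] {μ : Measure α} {F : ι → α → E} {G : α → E}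
    (hF_int : ∀ i, Integrable (F i) μ) (hF_sum : Summable fun i => ∫ x, ‖F i x‖ ∂μ)
    (hG : ∀ᵐ x ∂μ, HasSum (F · x) (G x)) : Integrable G μ := by
  refine ⟨aestronglyMeasurable_of_tendsto_ae Filter.atTop
    (f := fun (s : Finset ι) x => ∑ i ∈ s, F i x)
    (fun s => (integrable_finsetSum s fun i _ => hF_int i).aestronglyMeasurable) hG, ?_⟩
  calc ∫⁻ x, ‖G x‖ₑ ∂μ ≤ ∫⁻ x, ∑' i, ‖F i x‖ₑ ∂μ :=
        lintegral_mono_ae (hG.mono fun x hx => hx.tsum_eq ▸ enorm_tsum_le_tsum_enorm)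
    _ = ∑' i, ENNReal.ofReal (∫ x, ‖F i x‖ ∂μ) := by
        rw [lintegral_tsum fun i => (hF_int i).aestronglyMeasurable.enorm]
        exact tsum_congr fun i => (ofReal_integral_norm_eq_lintegral_enorm (hF_int i)).symm
    _ < ⊤ := hF_sum.tsum_ofReal_lt_top

variable {h : ℕ → ℝ} {F H : ℝ → ℝ} {M : ℝ}

lemma integrableOn_pow (k : ℕ) : IntegrableOn (fun u : ℝ => u ^ k) (Ioo 0 1) :=
  ((continuous_pow k).integrableOn_Icc).mono_set Ioo_subset_Icc_self

lemma setIntegral_pow (k : ℕ) : ∫ u in Ioo (0 : ℝ) 1, u ^ k = 1 / (k + 1) := by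
  rw [← integral_Ioc_eq_integral_Ioo, ← intervalIntegral.integral_of_le zero_le_one, integral_pow]
  simp

lemma aestronglyMeasurable_of_hasSum_pow
    (hH : ∀ u ∈ Ioo (0 : ℝ) 1, HasSum (fun k => h k * u ^ k) (H u)) :
    AEStronglyMeasurable H (volume.restrict (Ioo 0 1)) :=
  aestronglyMeasurable_of_tendsto_ae Filter.atTop
    (f := fun n u => ∑ k ∈ Finset.range n, h k * u ^ k)
    (fun n => Continuous.aestronglyMeasurable (by fun_prop))
    (ae_restrict_of_forall_mem measurableSet_Ioo fun u hu => (hH u hu).tendsto_sum_nat)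

lemma abs_le_tsum_of_hasSum_pow (hh : Summable fun k => |h k|)
    (hH : ∀ u ∈ Ioo (0 : ℝ) 1, HasSum (fun k => h k * u ^ k) (H u)) {u : ℝ}
    (hu : u ∈ Ioo 0 1) : |H u| ≤ ∑' k, |h k| := by
  rw [← (hH u hu).tsum_eq, ← Real.norm_eq_abs]
  refine tsum_of_norm_bounded hh.hasSum fun k => ?_
  rw [norm_mul, Real.norm_eq_abs, Real.norm_of_nonneg (pow_nonneg hu.1.le k)]
  exact mul_le_of_le_one_right (abs_nonneg _) (pow_le_one₀ hu.1.le hu.2.le)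

lemma integrableOn_pow_mul (hF : AEStronglyMeasurable F (volume.restrict (Ioo 0 1)))
    (hM : ∀ u ∈ Ioo (0 : ℝ) 1, |F u| ≤ M) (k : ℕ) :
    IntegrableOn (fun u => u ^ k * F u) (Ioo 0 1) :=
  (integrableOn_pow k).mul_bdd hF (ae_restrict_of_forall_mem measurableSet_Ioo hM)

lemma summable_integral_norm_pow_mul (hh : Summable fun k => |h k| / (k + 1))
    (hF : AEStronglyMeasurable F (volume.restrict (Ioo 0 1)))
    (hM : ∀ u ∈ Ioo (0 : ℝ) 1, |F u| ≤ M) :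
    Summable fun k => ∫ u in Ioo (0 : ℝ) 1, ‖h k * (u ^ k * F u)‖ := by
  refine (hh.mul_right M).of_nonneg_of_le (fun k => integral_nonneg fun u => norm_nonneg _)
    fun k => ?_
  calc ∫ u in Ioo (0 : ℝ) 1, ‖h k * (u ^ k * F u)‖
      ≤ ∫ u in Ioo (0 : ℝ) 1, |h k| * M * u ^ k := by
        refine setIntegral_mono_on ((integrableOn_pow_mul hF hM k).const_mul _).norm
          ((integrableOn_pow k).const_mul _) measurableSet_Ioo fun u hu => ?_
        have hu_pow := pow_nonneg hu.1.le k
        rw [norm_mul, norm_mul, Real.norm_eq_abs, Real.norm_of_nonneg hu_pow, mul_assoc,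
          mul_comm M]
        gcongr
        exact hM u hu
    _ = |h k| / (k + 1) * M := by
        rw [integral_const_mul, setIntegral_pow]
        ring

lemma integrableOn_mul_of_hasSum_pow (hh : Summable fun k => |h k| / (k + 1))
    (hH : ∀ u ∈ Ioo (0 : ℝ) 1, HasSum (fun k => h k * u ^ k) (H u))
    (hF : AEStronglyMeasurable F (volume.restrict (Ioo 0 1)))
    (hM : ∀ u ∈ Ioo (0 : ℝ) 1, |F u| ≤ M) : IntegrableOn (fun u => H u * F u) (Ioo 0 1) :=
  integrable_of_hasSum_of_summable_integral_norm
    (fun k => (integrableOn_pow_mul hF hM k).const_mul (h k))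
    (summable_integral_norm_pow_mul hh hF hM)
    (ae_restrict_of_forall_mem measurableSet_Ioo fun u hu => by
      simpa only [mul_assoc] using (hH u hu).mul_right (F u))

lemma hasSum_setIntegral_mul_of_hasSum_pow (hh : Summable fun k => |h k| / (k + 1))
    (hH : ∀ u ∈ Ioo (0 : ℝ) 1, HasSum (fun k => h k * u ^ k) (H u))
    (hF : AEStronglyMeasurable F (volume.restrict (Ioo 0 1)))
    (hM : ∀ u ∈ Ioo (0 : ℝ) 1, |F u| ≤ M) :
    HasSum (fun k => h k * ∫ u in Ioo (0 : ℝ) 1, u ^ k * F u)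
      (∫ u in Ioo (0 : ℝ) 1, H u * F u) := by
  have hsum := hasSum_integral_of_summable_integral_norm
    (fun k => (integrableOn_pow_mul hF hM k).const_mul (h k))
    (summable_integral_norm_pow_mul hh hF hM)
  have hseries : ∀ u ∈ Ioo (0 : ℝ) 1, ∑' k, h k * (u ^ k * F u) = H u * F u := fun u hu => by
    simpa only [mul_assoc] using ((hH u hu).mul_right (F u)).tsum_eq
  simpa only [integral_const_mul, setIntegral_congr_fun measurableSet_Ioo hseries] using hsum

end PowerSeries

section Kernel

variable {a b c p u : ℝ}

lemma restrict_Ioo_restrict_Iio {l r y : ℝ} (hy : y ≤ r) (μ : Measure ℝ) :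
    (μ.restrict (Ioo l r)).restrict (Iio y) = μ.restrict (Ioo l y) := by
  rw [Measure.restrict_restrict measurableSet_Iio, inter_comm, Ioo_inter_Iio, min_eq_right hy]

lemma restrict_Ioo_restrict_Ioi {l r x : ℝ} (hx : l ≤ x) (μ : Measure ℝ) :
    (μ.restrict (Ioo l r)).restrict (Ioi x) = μ.restrict (Ioo x r) := by
  rw [Measure.restrict_restrict measurableSet_Ioi, inter_comm, Ioo_inter_Ioi, max_eq_right hx]

/-- Up to the factor `-p * (1 - u)`, the derivative of `v ↦ unitMobius u v ^ p`. -/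
noncomputable def mobiusWeight (p u v : ℝ) : ℝ := (1 - v) ^ (p - 1) * (1 - u * v) ^ (-p - 1)

lemma mobiusWeight_nonneg (hu : u ≤ 1) {v : ℝ} (hv : v ∈ Ioo 0 1) : 0 ≤ mobiusWeight p u v :=
  mul_nonneg (Real.rpow_nonneg (sub_nonneg.2 hv.2.le) _)
    (Real.rpow_nonneg (one_sub_mul_pos hu hv).le _)

lemma hasDerivAt_unitMobius_rpow (hp : p ≠ 0) (hu : u < 1) {v : ℝ} (hv : v ∈ Ioo 0 1) :
    HasDerivAt (fun v => -(unitMobius u v ^ p / (p * (1 - u)))) (mobiusWeight p u v) v := by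
  have huv := one_sub_mul_pos hu.le hv
  have hv1 : 0 < 1 - v := sub_pos.2 hv.2
  have hu1 : 1 - u ≠ 0 := (sub_pos.2 hu).ne'
  refine (((hasDerivAt_unitMobius huv.ne').rpow_const
    (Or.inl (unitMobius_mem_Ioo hu hv).1.ne')).div_const (p * (1 - u))).fun_neg.congr_deriv ?_
  have hpow : (1 - u * v) ^ (-p - 1) = ((1 - u * v) ^ (p - 1))⁻¹ * ((1 - u * v) ^ 2)⁻¹ := by
    rw [← Real.rpow_neg huv.le, ← Real.rpow_natCast, ← Real.rpow_neg huv.le, ← Real.rpow_add huv]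
    push_cast
    ring_nf
  rw [mobiusWeight, hpow, unitMobius, Real.div_rpow hv1.le huv.le]
  field_simp

lemma continuousOn_unitMobius_rpow (hp : 0 ≤ p) (hu : u < 1) :
    ContinuousOn (fun v => -(unitMobius u v ^ p / (p * (1 - u)))) (Icc 0 1) := by
  refine (ContinuousOn.div_const (ContinuousOn.rpow_const ?_ fun _ _ => Or.inr hp) _).fun_neg
  exact ContinuousOn.div (by fun_prop) (by fun_prop) fun v hv =>
    (one_sub_mul_pos_of_mem_Icc hu hv).ne'

lemma integrableOn_mobiusWeight (hp : 0 < p) (hu : u < 1) :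
    IntegrableOn (mobiusWeight p u) (Ioo 0 1) :=
  (intervalIntegral.integrableOn_deriv_of_nonneg (continuousOn_unitMobius_rpow hp.le hu)
    (fun _ hv => hasDerivAt_unitMobius_rpow hp.ne' hu hv)
    (fun _ hv => mobiusWeight_nonneg hu.le hv)).mono_set Ioo_subset_Ioc_self

lemma setIntegral_mobiusWeight (hp : 0 < p) (hu : u < 1) {s : ℝ} (hs : s ∈ Ioo 0 1) :
    ∫ v in Ioo s 1, mobiusWeight p u v = unitMobius u s ^ p / (p * (1 - u)) := by
  have hint := (integrableOn_mobiusWeight hp hu).mono_set (Ioo_subset_Ioo_left hs.1.le)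
  rw [← integral_Ioc_eq_integral_Ioo, ← intervalIntegral.integral_of_le hs.2.le,
    intervalIntegral.integral_eq_sub_of_hasDerivAt_of_le hs.2.le
      ((continuousOn_unitMobius_rpow hp.le hu).mono (Icc_subset_Icc_left hs.1.le))
      (fun v hv => hasDerivAt_unitMobius_rpow hp.ne' hu ⟨hs.1.trans hv.1, hv.2⟩)
      ((intervalIntegrable_iff_integrableOn_Ioo_of_le hs.2.le).2 hint)]
  simp [unitMobius, Real.zero_rpow hp.ne']

/-- The integrand of the double integral without its factor `₂F₁(α, β; β + 1; u)`. -/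
noncomputable def hypKernel (a b c u v : ℝ) : ℝ :=
  (1 - u) ^ (1 + c - a - b) *
    (v ^ (c - b) * (1 - v) ^ (b - 1) * (1 - u * v) ^ (a - c - 1) * hyp2F1 1 a (c - b + 1) v)

lemma hypKernel_nonneg (ha : 0 < a) (hbc : b < c) (hu : u ≤ 1) {v : ℝ} (hv : v ∈ Ioo 0 1) :
    0 ≤ hypKernel a b c u v := by
  have := hv.1
  have := sub_pos.2 hv.2
  have := sub_nonneg.2 hu
  have := one_sub_mul_pos hu hv
  have := hyp2F1_nonneg one_pos ha (by linarith : 0 < c - b + 1) hv.1.le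
  unfold hypKernel
  positivity

lemma hypKernel_eq_mul_setIntegral (ha : 0 < a) (hbc : b < c) {v : ℝ} (hv : v ∈ Ioo 0 1) :
    hypKernel a b c u v = (c - b) * (1 - u) ^ (1 + c - a - b) *
      (mobiusWeight (c - a) u v * ∫ s in Ioo 0 v, s ^ (c - b - 1) * (1 - s) ^ (a + b - c - 1)) := by
  have hv1 : 0 < 1 - v := sub_pos.2 hv.2
  have hbeta := rpow_mul_hyp2F1_one_left (a := c - b) (b := a + b - c) (by linarith)
    (by linarith) hv
  rw [show c - b + (a + b - c) = a by ring] at hbeta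
  have hpow : (1 - v) ^ (b - 1) * (1 - v) ^ (-(a + b - c)) = (1 - v) ^ (c - a - 1) := by
    rw [← Real.rpow_add hv1]
    ring_nf
  rw [hypKernel, mobiusWeight, ← hpow, show -(c - a) - 1 = a - c - 1 by ring]
  linear_combination
    (1 - u) ^ (1 + c - a - b) * (1 - v) ^ (b - 1) * (1 - u * v) ^ (a - c - 1) * hbeta

lemma rpow_mul_unitMobius_rpow (hu : u < 1) {s : ℝ} (hs : s ∈ Ioo 0 1) :
    s ^ (c - b - 1) * (1 - s) ^ (a + b - c - 1) * unitMobius u s ^ (c - a) =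
      eulerIntegrand (c - a) (c - b) c u s := by
  have hs1 : 0 < 1 - s := sub_pos.2 hs.2
  have hus := one_sub_mul_pos hu.le hs
  rw [eulerIntegrand, unitMobius, Real.div_rpow hs1.le hus.le, Real.rpow_neg hus.le,
    show c - (c - b) - 1 = a + b - c - 1 + (c - a) by ring, Real.rpow_add hs1]
  ring

lemma integrable_hypKernel_triangle (hac : a < c) (hb : 0 < b) (hbc : b < c) (hu : u < 1) :
    Integrable ({p : ℝ × ℝ | p.1 < p.2}.indicator fun p =>
        p.1 ^ (c - b - 1) * (1 - p.1) ^ (a + b - c - 1) * mobiusWeight (c - a) u p.2)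
      ((volume.restrict (Ioo 0 1)).prod (volume.restrict (Ioo 0 1))) := by
  have hweight := integrableOn_mobiusWeight (sub_pos.2 hac) hu
  refine integrable_indicator_triangle
    (f := fun s => s ^ (c - b - 1) * (1 - s) ^ (a + b - c - 1))
    (Measurable.aestronglyMeasurable (by fun_prop)) hweight.aestronglyMeasurable
    (.of_forall fun s => Integrable.integrableOn hweight) ?_
  refine ((integrableOn_eulerIntegrand (c - a) (sub_pos.2 hbc) (sub_lt_self c hb) hu).div_const
    ((c - a) * (1 - u))).congr (ae_restrict_of_forall_mem measurableSet_Ioo fun s hs => ?_)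
  simp only [restrict_Ioo_restrict_Ioi hs.1.le]
  rw [setIntegral_congr_fun measurableSet_Ioo fun v hv =>
      Real.norm_of_nonneg (mobiusWeight_nonneg hu.le ⟨hs.1.trans hv.1, hv.2⟩),
    setIntegral_mobiusWeight (sub_pos.2 hac) hu hs, ← rpow_mul_unitMobius_rpow hu hs, mul_div_assoc]

lemma integrableOn_hypKernel (ha : 0 < a) (hac : a < c) (hb : 0 < b) (hbc : b < c) (hu : u < 1) :
    IntegrableOn (hypKernel a b c u) (Ioo 0 1) := by
  refine ((integrable_mul_setIntegral_Iio
    (f := fun s => s ^ (c - b - 1) * (1 - s) ^ (a + b - c - 1))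
    (integrable_hypKernel_triangle hac hb hbc hu)).const_mul
      ((c - b) * (1 - u) ^ (1 + c - a - b))).congr
        (ae_restrict_of_forall_mem measurableSet_Ioo fun v hv => ?_)
  simp only [restrict_Ioo_restrict_Iio hv.2.le, hypKernel_eq_mul_setIntegral ha hbc hv]

lemma setIntegral_hypKernel (ha : 0 < a) (hac : a < c) (hb : 0 < b) (hbc : b < c)
    (hu : u ∈ Ioo 0 1) :
    ∫ v in Ioo 0 1, hypKernel a b c u v =
      (c - b) * beta b (c - b) / (c - a) * hyp2F1 a b c u := by
  have hu1 : 0 < 1 - u := sub_pos.2 hu.2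
  have hfubini := integral_mul_setIntegral_Iio
    (f := fun s => s ^ (c - b - 1) * (1 - s) ^ (a + b - c - 1))
    (integrable_hypKernel_triangle hac hb hbc hu.2)
  have hinner : ∫ s in Ioo 0 1, s ^ (c - b - 1) * (1 - s) ^ (a + b - c - 1) *
        ∫ v in Ioi s, mobiusWeight (c - a) u v ∂(volume.restrict (Ioo 0 1)) =
      eulerIntegral (c - a) (c - b) c u / ((c - a) * (1 - u)) := by
    rw [eulerIntegral, ← integral_div]
    refine setIntegral_congr_fun measurableSet_Ioo fun s hs => ?_
    simp only [restrict_Ioo_restrict_Ioi hs.1.le]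
    rw [setIntegral_mobiusWeight (sub_pos.2 hac) hu.2 hs, ← rpow_mul_unitMobius_rpow hu.2 hs,
      mul_div_assoc]
  rw [setIntegral_congr_fun measurableSet_Ioo fun v hv => hypKernel_eq_mul_setIntegral ha hbc hv,
    integral_const_mul, setIntegral_congr_fun measurableSet_Ioo fun v hv => by
      rw [← restrict_Ioo_restrict_Iio hv.2.le], hfubini, hinner,
    hyp2F1_eq_eulerIntegral ha hb hbc hu.1.le hu.2, eulerIntegral_euler_transformation a b c hu.2,
    show 1 + c - a - b = c - a - b + 1 by ring, Real.rpow_add_one hu1.ne']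
  have := beta_pos hb (sub_pos.2 hbc)
  have := sub_pos.2 hac
  field_simp

lemma aestronglyMeasurable_hyp2F1 (ha : 0 < a) (hb : 0 < b) (hbc : b < c) :
    AEStronglyMeasurable (hyp2F1 a b c) (volume.restrict (Ioo 0 1)) :=
  aestronglyMeasurable_of_hasSum_pow fun _ hu => hasSum_hyp2F1 ha hb hbc hu.1.le hu.2

variable {F : ℝ → ℝ}

lemma aestronglyMeasurable_hypKernel_mul (ha : 0 < a) (hbc : b < c)
    (hF : AEStronglyMeasurable F (volume.restrict (Ioo 0 1))) :
    AEStronglyMeasurable (fun p : ℝ × ℝ => hypKernel a b c p.2 p.1 * F p.2)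
      ((volume.restrict (Ioo 0 1)).prod (volume.restrict (Ioo 0 1))) := by
  have hmeas_hyp : AEStronglyMeasurable (hyp2F1 1 a (c - b + 1)) (volume.restrict (Ioo 0 1)) := by
    rw [funext (hyp2F1_comm 1 a (c - b + 1))]
    exact aestronglyMeasurable_hyp2F1 ha one_pos (by linarith)
  have hmeas_rpow : Measurable fun p : ℝ × ℝ =>
      p.1 ^ (c - b) * (1 - p.1) ^ (b - 1) * (1 - p.2 * p.1) ^ (a - c - 1) := by fun_prop
  have hmeas_prefactor : Measurable fun p : ℝ × ℝ => (1 - p.2) ^ (1 + c - a - b) := by fun_prop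
  exact (hmeas_prefactor.aestronglyMeasurable.mul
    (hmeas_rpow.aestronglyMeasurable.mul hmeas_hyp.comp_fst)).mul hF.comp_snd

lemma integrable_hypKernel_mul (ha : 0 < a) (hac : a < c) (hb : 0 < b) (hbc : b < c)
    (hF : AEStronglyMeasurable F (volume.restrict (Ioo 0 1)))
    (hHF : IntegrableOn (fun u => hyp2F1 a b c u * F u) (Ioo 0 1)) :
    Integrable (fun p : ℝ × ℝ => hypKernel a b c p.2 p.1 * F p.2)
      ((volume.restrict (Ioo 0 1)).prod (volume.restrict (Ioo 0 1))) := by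
  rw [integrable_prod_iff' (aestronglyMeasurable_hypKernel_mul ha hbc hF)]
  refine ⟨ae_restrict_of_forall_mem measurableSet_Ioo fun u hu =>
    (integrableOn_hypKernel ha hac hb hbc hu.2).mul_const (F u), ?_⟩
  refine (hHF.norm.const_mul ((c - b) * beta b (c - b) / (c - a))).congr
    (ae_restrict_of_forall_mem measurableSet_Ioo fun u hu => ?_)
  simp only [norm_mul]
  rw [integral_mul_const, setIntegral_congr_fun measurableSet_Ioo fun v hv =>
      Real.norm_of_nonneg (hypKernel_nonneg ha hbc hu.2.le hv),
    setIntegral_hypKernel ha hac hb hbc hu,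
    Real.norm_of_nonneg (hyp2F1_nonneg ha hb (hb.trans hbc) hu.1.le), mul_assoc]

lemma setIntegral_setIntegral_hypKernel_mul (ha : 0 < a) (hac : a < c) (hb : 0 < b) (hbc : b < c)
    (hF : AEStronglyMeasurable F (volume.restrict (Ioo 0 1)))
    (hHF : IntegrableOn (fun u => hyp2F1 a b c u * F u) (Ioo 0 1)) :
    ∫ v in Ioo 0 1, ∫ u in Ioo 0 1, hypKernel a b c u v * F u =
      (c - b) * beta b (c - b) / (c - a) * ∫ u in Ioo 0 1, hyp2F1 a b c u * F u := by
  rw [integral_integral_swap (integrable_hypKernel_mul ha hac hb hbc hF hHF), ← integral_const_mul]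
  refine setIntegral_congr_fun measurableSet_Ioo fun u hu => ?_
  simp only [integral_mul_const]
  rw [setIntegral_hypKernel ha hac hb hbc hu, mul_assoc]

end Kernel

section Moments

variable {a b x : ℝ}

lemma hasSum_poch_div_add (ha : 0 < a) (ha1 : a < 1) (hx : 0 < x) :
    HasSum (fun k : ℕ => poch a k / k ! / (x + k)) (beta x (1 - a)) := by
  have hgauss := (hasSum_hypCoeff_gauss ha hx (by linarith : a + x < x + 1)).div_const x
  rw [add_sub_cancel_left, beta_one_right hx, div_div, one_div_mul_cancel hx.ne', div_one,
    show x + 1 - a - x = 1 - a by ring] at hgauss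
  refine hgauss.congr_fun fun k => ?_
  have hcoeff := hypCoeff_add_one_mul a (by linarith : -1 < x) k
  field_simp at hcoeff ⊢
  linear_combination -hcoeff

lemma hypCoeff_add_one_succ (a : ℝ) (hb : -1 < b) (k : ℕ) :
    hypCoeff a b (b + 1) (k + 1) =
      (b + 1 - a) * (poch a k / k ! / (b + 1 + k)) - (1 - a) * (poch a k / k ! / (1 + k)) := by
  have hbk : 0 < b + 1 + k := add_pos_of_pos_of_nonneg (neg_lt_iff_pos_add.1 hb) k.cast_nonneg
  have hcoeff := hypCoeff_add_one_mul a hb (k + 1)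
  rw [poch_succ, Nat.factorial_succ] at hcoeff
  push_cast at hcoeff
  rw [mul_div_mul_comm] at hcoeff
  have hcancel_b := div_mul_cancel₀ (poch a k / k !) hbk.ne'
  have hcancel_one := div_mul_cancel₀ (poch a k / k !) (by positivity : (1 + k : ℝ) ≠ 0)
  refine mul_right_cancel₀ hbk.ne' ?_
  linear_combination hcoeff - (b + 1 - a) * hcancel_b + (b + 1 - a) * hcancel_one

lemma hasSum_hypCoeff_add_one (ha : 0 < a) (ha1 : a < 1) (hb : -1 < b) :
    HasSum (hypCoeff a b (b + 1)) ((b + 1 - a) * beta (b + 1) (1 - a)) := by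
  rw [← hasSum_nat_add_iff' 1]
  simp only [hypCoeff_add_one_succ a hb]
  convert! ((hasSum_poch_div_add ha ha1 (neg_lt_iff_pos_add.1 hb)).mul_left (b + 1 - a)).sub
    ((hasSum_poch_div_add ha ha1 one_pos).mul_left (1 - a)) using 1
  have : 1 - a ≠ 0 := (sub_pos.2 ha1).ne'
  rw [beta_one_left (sub_pos.2 ha1)]
  simp [hypCoeff, poch_zero, this]

lemma hasSum_hypCoeff_add_one_div_add (ha : 0 < a) (ha1 : a < 1) (hb : -1 < b) (hx : 0 < x)
    (hxb : x ≠ b) :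
    HasSum (fun k : ℕ => hypCoeff a b (b + 1) k / (x + k))
      (((b + 1 - a) * beta (b + 1) (1 - a) - b * beta x (1 - a)) / (x - b)) := by
  refine (((hasSum_hypCoeff_add_one ha ha1 hb).sub
    ((hasSum_poch_div_add ha ha1 hx).mul_left b)).div_const (x - b)).congr_fun fun k => ?_
  have := sub_ne_zero.2 hxb
  rw [← mul_div_assoc, ← hypCoeff_add_one_mul a hb]
  field_simp
  ring

lemma summable_abs_hypCoeff_add_one (ha : 0 < a) (ha1 : a < 1) (hb : -1 < b) :
    Summable fun k => |hypCoeff a b (b + 1) k| :=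
  (hasSum_hypCoeff_add_one ha ha1 hb).summable.abs

lemma hasSum_hyp2F1_add_one (ha : 0 < a) (ha1 : a < 1) (hb : -1 < b) {u : ℝ} (hu : u ∈ Ioo 0 1) :
    HasSum (fun k => hypCoeff a b (b + 1) k * u ^ k) (hyp2F1 a b (b + 1) u) := by
  rw [hyp2F1_eq_tsum]
  refine (Summable.of_norm_bounded (summable_abs_hypCoeff_add_one ha ha1 hb) fun k => ?_).hasSum
  rw [norm_mul, Real.norm_eq_abs, Real.norm_of_nonneg (pow_nonneg hu.1.le k)]
  exact mul_le_of_le_one_right (abs_nonneg _) (pow_le_one₀ hu.1.le hu.2.le)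

lemma setIntegral_pow_mul_hyp2F1_add_one (ha : 0 < a) (ha1 : a < 1) (hb : -1 < b) (hb1 : b < 1)
    (j : ℕ) :
    ∫ u in Ioo 0 1, u ^ j * hyp2F1 a b (b + 1) u =
      ((b + 1 - a) * beta (b + 1) (1 - a) - b / (1 - a) * (j ! / poch (2 - a) j)) /
        (1 - b + j) := by
  have hsummable : Summable fun k : ℕ => |hypCoeff a b (b + 1) k| / (k + 1) :=
    (summable_abs_hypCoeff_add_one ha ha1 hb).of_nonneg_of_le (fun k => by positivity)
      fun k => div_le_self (abs_nonneg _) (by simp)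
  have hmoment := hasSum_setIntegral_mul_of_hasSum_pow hsummable
    (fun u hu => hasSum_hyp2F1_add_one ha ha1 hb hu) (F := fun u => u ^ j) (M := 1)
    (continuous_pow j).aestronglyMeasurable fun u hu => by
      rw [abs_of_nonneg (pow_nonneg hu.1.le j)]
      exact pow_le_one₀ hu.1.le hu.2.le
  simp only [← pow_add, setIntegral_pow, mul_comm (hyp2F1 _ _ _ _)] at hmoment
  have hseries := hasSum_hypCoeff_add_one_div_add ha ha1 hb (x := 1 + j) (by positivity)
    (by have : (0 : ℝ) ≤ j := j.cast_nonneg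
        linarith)
  rw [beta_add_natCast one_pos (sub_pos.2 ha1), beta_one_left (sub_pos.2 ha1), poch_one,
    show 1 + (1 - a) = 2 - a by ring] at hseries
  refine hmoment.unique ?_
  convert! hseries using 1
  · ext k
    push_cast
    ring
  · ring

end Moments

section Summability

variable {a b c x : ℝ}

lemma hypCoeff_succ (a b c : ℝ) (k : ℕ) :
    hypCoeff a b c (k + 1) = a * ((b + k) / (c + k)) * (hypCoeff (a + 1) b c k / (k + 1)) := by
  rw [hypCoeff, hypCoeff, poch_succ a, poch_mul_add, poch_succ b, poch_succ c, Nat.factorial_succ]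
  push_cast
  simp only [div_eq_mul_inv, mul_inv]
  ring

lemma hypCoeff_div_add_one_le {δ : ℝ} (ha : 0 < a) (haδ : a ≤ δ + 1) (hδ : 0 < δ) (hb : 0 < b)
    (hbc : b < c) (k : ℕ) :
    hypCoeff a b c k / (k + 1) ≤ c / (b * δ) * hypCoeff δ b c (k + 1) := by
  have hc := hb.trans hbc
  have hb_poch := (poch_pos hb k).le
  have hc_poch := (poch_pos hc k).le
  have hcoeff : 0 ≤ hypCoeff (δ + 1) b c k := (hypCoeff_pos (by linarith) hb hc k).le
  have hratio : b / c ≤ (b + k) / (c + k) := by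
    rw [div_le_div_iff₀ hc (by positivity)]
    nlinarith [k.cast_nonneg (α := ℝ)]
  calc hypCoeff a b c k / (k + 1) ≤ hypCoeff (δ + 1) b c k / (k + 1) := by
        unfold hypCoeff
        gcongr
        exact poch_le_poch ha haδ k
    _ = c / (b * δ) * (δ * (b / c) * (hypCoeff (δ + 1) b c k / (k + 1))) := by field_simp
    _ ≤ c / (b * δ) * (δ * ((b + k) / (c + k)) * (hypCoeff (δ + 1) b c k / (k + 1))) := by gcongr
    _ = c / (b * δ) * hypCoeff δ b c (k + 1) := by rw [hypCoeff_succ]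

lemma summable_hypCoeff_div_add_one (ha : 0 < a) (hb : 0 < b) (hbc : b < c) (habc : a + b < c + 1) :
    Summable fun k : ℕ => hypCoeff a b c k / (k + 1) := by
  obtain ⟨δ, hδ, hδc⟩ := exists_between
    (max_lt (sub_pos.2 hbc) (by linarith) : max 0 (a - 1) < c - b)
  obtain ⟨hδ0, haδ⟩ := max_lt_iff.1 hδ
  have hgauss := (hasSum_hypCoeff_gauss hδ0 hb (by linarith : δ + b < c)).summable
  refine (((summable_nat_add_iff 1).2 hgauss).mul_left (c / (b * δ))).of_nonneg_of_le
    (fun k => ?_) fun k => hypCoeff_div_add_one_le ha (by linarith) hδ0 hb hbc k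
  have := hypCoeff_pos ha hb (hb.trans hbc) k
  positivity

lemma summable_div_add_natCast {f : ℕ → ℝ} (hf : ∀ k, 0 ≤ f k)
    (hsum : Summable fun k : ℕ => f k / (k + 1)) (hx : 0 < x) :
    Summable fun k : ℕ => f k / (x + k) := by
  refine (hsum.mul_left (1 + 1 / x)).of_nonneg_of_le
    (fun k => div_nonneg (hf k) (by positivity)) fun k => ?_
  have hratio : 1 / (x + k) ≤ (1 + 1 / x) / (k + 1) := by
    rw [div_le_div_iff₀ (by positivity) (by positivity)]
    have : 0 ≤ k / x := by positivity
    field_simp at this ⊢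
    nlinarith
  calc f k / (x + k) = f k * (1 / (x + k)) := by ring
    _ ≤ f k * ((1 + 1 / x) / (k + 1)) := mul_le_mul_of_nonneg_left hratio (hf k)
    _ = (1 + 1 / x) * (f k / (k + 1)) := by ring

lemma poch_div_poch_add_one (hx : 0 < x) (k : ℕ) :
    poch x k / poch (x + 1) k = x / (x + k) := by
  have := poch_pos (by linarith : 0 < x + 1) k
  rw [div_eq_div_iff (by positivity) (by positivity), poch_mul_add]

lemma hyp3F2_add_one_eq_tsum (a b c : ℝ) (hx : 0 < x) :
    hyp3F2 a x b (x + 1) c 1 = x * ∑' k : ℕ, hypCoeff a b c k / (x + k) := by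
  rw [hyp3F2, ← tsum_mul_left]
  refine tsum_congr fun k => ?_
  calc _ = hypCoeff a b c k * (poch x k / poch (x + 1) k) := by rw [hypCoeff, one_pow]; ring
    _ = x * (hypCoeff a b c k / (x + k)) := by rw [poch_div_poch_add_one hx]; ring

lemma hyp4F3_add_one_eq_tsum (a b c e : ℝ) (hx : 0 < x) :
    hyp4F3 1 a x b e (x + 1) c 1 =
      x * ∑' k : ℕ, hypCoeff a b c k / (x + k) * (k ! / poch e k) := by
  rw [hyp4F3, ← tsum_mul_left]
  refine tsum_congr fun k => ?_
  calc _ = hypCoeff a b c k * (poch x k / poch (x + 1) k) * (k ! / poch e k) := by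
        rw [hypCoeff, poch_one, one_pow]; ring
    _ = x * (hypCoeff a b c k / (x + k) * (k ! / poch e k)) := by
        rw [poch_div_poch_add_one hx]; ring

end Summability

section DoubleIntegral

variable {a b c α β : ℝ}

lemma factorial_div_poch_le_one {x : ℝ} (hx : 1 ≤ x) (k : ℕ) : k ! / poch x k ≤ 1 := by
  rw [div_le_one (poch_pos (by linarith) k), ← poch_one]
  exact poch_le_poch one_pos hx k

lemma summable_abs_hypCoeff_div_add_one (ha : 0 < a) (hb : 0 < b) (hbc : b < c)
    (habc : a + b < c + 1) : Summable fun k : ℕ => |hypCoeff a b c k| / (k + 1) := by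
  simpa only [abs_of_pos (hypCoeff_pos ha hb (hb.trans hbc) _)] using
    summable_hypCoeff_div_add_one ha hb hbc habc

lemma aestronglyMeasurable_hyp2F1_add_one (hα : 0 < α) (hα1 : α < 1) (hβ : -1 < β) :
    AEStronglyMeasurable (hyp2F1 α β (β + 1)) (volume.restrict (Ioo 0 1)) :=
  aestronglyMeasurable_of_hasSum_pow fun _ hu => hasSum_hyp2F1_add_one hα hα1 hβ hu

lemma abs_hyp2F1_add_one_le (hα : 0 < α) (hα1 : α < 1) (hβ : -1 < β) {u : ℝ} (hu : u ∈ Ioo 0 1) :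
    |hyp2F1 α β (β + 1) u| ≤ ∑' k, |hypCoeff α β (β + 1) k| :=
  abs_le_tsum_of_hasSum_pow (summable_abs_hypCoeff_add_one hα hα1 hβ)
    (fun _ hu => hasSum_hyp2F1_add_one hα hα1 hβ hu) hu

lemma integrableOn_hyp2F1_mul_hyp2F1_add_one (ha : 0 < a) (hb : 0 < b) (hbc : b < c)
    (habc : a + b < c + 1) (hα : 0 < α) (hα1 : α < 1) (hβ : -1 < β) :
    IntegrableOn (fun u => hyp2F1 a b c u * hyp2F1 α β (β + 1) u) (Ioo 0 1) :=
  integrableOn_mul_of_hasSum_pow (summable_abs_hypCoeff_div_add_one ha hb hbc habc)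
    (fun _ hu => hasSum_hyp2F1 ha hb hbc hu.1.le hu.2)
    (aestronglyMeasurable_hyp2F1_add_one hα hα1 hβ) fun _ hu => abs_hyp2F1_add_one_le hα hα1 hβ hu

lemma setIntegral_hyp2F1_mul_hyp2F1_add_one (ha : 0 < a) (hb : 0 < b) (hbc : b < c)
    (habc : a + b < c + 1) (hα : 0 < α) (hα1 : α < 1) (hβ : -1 < β) (hβ1 : β < 1) :
    ∫ u in Ioo 0 1, hyp2F1 a b c u * hyp2F1 α β (β + 1) u =
      (β + 1 - α) * beta (β + 1) (1 - α) / (1 - β) * hyp3F2 a (1 - β) b (2 - β) c 1 -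
        β / ((1 - β) * (1 - α)) * hyp4F3 1 a (1 - β) b (2 - α) (2 - β) c 1 := by
  have hx : 0 < 1 - β := sub_pos.2 hβ1
  have hcoeff (k : ℕ) : 0 ≤ hypCoeff a b c k := (hypCoeff_pos ha hb (hb.trans hbc) k).le
  have hsummable₃ : Summable fun k : ℕ => hypCoeff a b c k / (1 - β + k) :=
    summable_div_add_natCast hcoeff (summable_hypCoeff_div_add_one ha hb hbc habc) hx
  have hsummable₄ : Summable fun k : ℕ =>
      hypCoeff a b c k / (1 - β + k) * (k ! / poch (2 - α) k) := by
    refine hsummable₃.of_nonneg_of_le (fun k => ?_) fun k => ?_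
    · have := hcoeff k
      have := poch_pos (by linarith : 0 < 2 - α) k
      positivity
    · exact mul_le_of_le_one_right (div_nonneg (hcoeff k) (by positivity))
        (factorial_div_poch_le_one (by linarith) k)
  have hseries := hasSum_setIntegral_mul_of_hasSum_pow
    (summable_abs_hypCoeff_div_add_one ha hb hbc habc)
    (fun _ hu => hasSum_hyp2F1 ha hb hbc hu.1.le hu.2)
    (aestronglyMeasurable_hyp2F1_add_one hα hα1 hβ) fun _ hu => abs_hyp2F1_add_one_le hα hα1 hβ hu
  simp only [setIntegral_pow_mul_hyp2F1_add_one hα hα1 hβ hβ1] at hseries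
  have hsplit := (hsummable₃.hasSum.mul_left ((β + 1 - α) * beta (β + 1) (1 - α))).sub
    (hsummable₄.hasSum.mul_left (β / (1 - α)))
  rw [show 2 - β = 1 - β + 1 by ring, hyp3F2_add_one_eq_tsum _ _ _ hx,
    hyp4F3_add_one_eq_tsum _ _ _ _ hx,
    hseries.unique (hsplit.congr_fun fun k => by ring)]
  field_simp

theorem double_integral_B_general (ha : 0 < a) (hac : a < c) (hb : 0 < b) (hbc : b < c)
    (habc : a + b < c + 1) (hα : 0 < α) (hα1 : α < 1) (hβ : -1 < β) (hβ1 : β < 1) :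
    ∫ v in (0 : ℝ)..1, ∫ u in (0 : ℝ)..1,
      (1 - u) ^ (1 + c - a - b) * v ^ (c - b) * (1 - v) ^ (b - 1) * (1 - u * v) ^ (a - c - 1) *
        hyp2F1 α β (β + 1) u * hyp2F1 1 a (c - b + 1) v =
      (c - b) * beta b (c - b) / (c - a) *
        ((β + 1 - α) * beta (β + 1) (1 - α) / (1 - β) * hyp3F2 a (1 - β) b (2 - β) c 1 -
          β / ((1 - β) * (1 - α)) * hyp4F3 1 a (1 - β) b (2 - α) (2 - β) c 1) := by
  rw [← setIntegral_hyp2F1_mul_hyp2F1_add_one ha hb hbc habc hα hα1 hβ hβ1,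
    ← setIntegral_setIntegral_hypKernel_mul ha hac hb hbc
      (aestronglyMeasurable_hyp2F1_add_one hα hα1 hβ)
      (integrableOn_hyp2F1_mul_hyp2F1_add_one ha hb hbc habc hα hα1 hβ)]
  simp only [intervalIntegral.integral_of_le zero_le_one, integral_Ioc_eq_integral_Ioo, hypKernel]
  refine setIntegral_congr_fun measurableSet_Ioo fun v _ =>
    setIntegral_congr_fun measurableSet_Ioo fun u _ => ?_
  ring

end DoubleIntegral

theorem double_integral_B (d : ℝ) (hd0 : 0 < d) (hd1 : d < 4 / 5) :
    (∫ v in (0:ℝ)..1, ∫ u in (0:ℝ)..1,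
      (1 - u) ^ (2 - 2 * d) * v ^ (1 - d) * (1 - v) ^ (2 - 3 * d) *
        (1 - u * v) ^ (5 * d - 5) * hyp2F1 d (2 * d - 1) (2 * d) u * hyp2F1 1 d (2 - d) v)
    = Real.Gamma (1 - d) ^ 2 * Real.Gamma (2 * d) * Real.Gamma (3 - 3 * d) *
        Real.Gamma (4 - 5 * d) /
        (2 * Real.Gamma d * Real.Gamma (5 - 5 * d) * Real.Gamma (4 - 4 * d)) *
        hyp3F2 d (2 - 2 * d) (3 - 3 * d) (3 - 2 * d) (4 - 4 * d) 1
      + Real.Gamma (1 - d) * (1 - 2 * d) / (2 - 2 * d) *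
          (Real.Gamma (3 - 3 * d) * Real.Gamma (4 - 5 * d) /
            (Real.Gamma (5 - 5 * d) * Real.Gamma (4 - 4 * d))) *
          hyp4F3 1 d (2 - 2 * d) (3 - 3 * d) (2 - d) (3 - 2 * d) (4 - 4 * d) 1 := by
  have h := double_integral_B_general (a := d) (b := 3 - 3 * d) (c := 4 - 4 * d) (α := d)
    (β := 2 * d - 1) hd0 (by linarith) (by linarith) (by linarith) (by linarith) hd0
    (by linarith) (by linarith) (by linarith)
  rw [show 1 + (4 - 4 * d) - d - (3 - 3 * d) = 2 - 2 * d by ring,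
    show 4 - 4 * d - (3 - 3 * d) = 1 - d by ring, show 3 - 3 * d - 1 = 2 - 3 * d by ring,
    show d - (4 - 4 * d) - 1 = 5 * d - 5 by ring, show 2 * d - 1 + 1 = 2 * d by ring,
    show 1 - d + 1 = 2 - d by ring, show 4 - 4 * d - d = 4 - 5 * d by ring,
    show 1 - (2 * d - 1) = 2 * (1 - d) by ring, show 2 - (2 * d - 1) = 3 - 2 * d by ring,
    beta, beta, show 3 - 3 * d + (1 - d) = 4 - 4 * d by ring,
    show 2 * d + (1 - d) = d + 1 by ring, Real.Gamma_add_one hd0.ne'] at h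
  have h45 : 0 < 4 - 5 * d := by linarith
  have h1 : 0 < 1 - d := by linarith
  rw [h, show 5 - 5 * d = 4 - 5 * d + 1 by ring, Real.Gamma_add_one h45.ne',
    show 2 - 2 * d = 2 * (1 - d) by ring]
  generalize 4 - 5 * d = x at *
  field_simp
  ring
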